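/- arXiv:0902.4404 — 2 statements merged into one kernel-verified Lean document; each statement's English description precedes it below -/
import Mathlib

section
/- Suppose smooth vector fields S, B, F, J : ℝ × ℝ³ → ℝ³ and smooth scalar fields W, η, ρ : ℝ × ℝ³ → ℝ are given, define E := ∇×S + F, and assume the reduced Hamiltonian system: ∂S/∂t = B, ∂W/∂t = −η, ∂B/∂t = −∇×(∇×S + F + ∇W), ∂η/∂t = −∇·E − ΔW, together with the external charge and current density conditions ∂F/∂t = −J, ∇·F = ρ, and ∇·B = 0. Then the full Maxwell equations hold on ℝ × ℝ³: ∂E/∂t = ∇×B − J, ∂B/∂t = −∇×E, ∇·E = ρ, ∇·B = 0; and moreover the scalar field W satisfies the inhomogeneous wave equation ∂²W/∂t² − ΔW = ρ. -/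
open scoped BigOperators

/-- Spatial partial derivative `∂f/∂xᵢ` of a scalar field on `ℝ³`. -/
noncomputable def pd (f : (Fin 3 → ℝ) → ℝ) (i : Fin 3) (x : Fin 3 → ℝ) : ℝ :=
  deriv (fun y => f (Function.update x i y)) (x i)

/-- Spatial divergence `∇·V := Σᵢ ∂Vᵢ/∂xᵢ` of a vector field on `ℝ³`. -/
noncomputable def div3 (V : (Fin 3 → ℝ) → Fin 3 → ℝ) (x : Fin 3 → ℝ) : ℝ :=
  ∑ i, pd (fun y => V y i) i x

/-- Spatial curl `∇×V` of a vector field on `ℝ³`: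
`(∇×V)ᵢ = ∂V_{i+2}/∂x_{i+1} − ∂V_{i+1}/∂x_{i+2}` (cyclically, so
`(∇×V)₁ = ∂V₃/∂x₂ − ∂V₂/∂x₃`). -/
noncomputable def curl3 (V : (Fin 3 → ℝ) → Fin 3 → ℝ) (x : Fin 3 → ℝ) (i : Fin 3) : ℝ :=
  pd (fun y => V y (i + 2)) (i + 1) x - pd (fun y => V y (i + 1)) (i + 2) x

/-- Spatial gradient `∇f` of a scalar field on `ℝ³`. -/
noncomputable def grad3 (f : (Fin 3 → ℝ) → ℝ) (x : Fin 3 → ℝ) (i : Fin 3) : ℝ :=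
  pd f i x

/-- Spatial Laplacian `Δf := Σᵢ ∂²f/∂xᵢ²` of a scalar field on `ℝ³`. -/
noncomputable def lap3 (f : (Fin 3 → ℝ) → ℝ) (x : Fin 3 → ℝ) : ℝ :=
  ∑ i, pd (fun y => pd f i y) i x

/-- A time-dependent vector field on `ℝ × ℝ³` is smooth (jointly in `(t,x)`). -/
def SmoothV (V : ℝ → (Fin 3 → ℝ) → Fin 3 → ℝ) : Prop :=
  ContDiff ℝ (⊤ : ℕ∞) (fun p : ℝ × (Fin 3 → ℝ) => V p.1 p.2)

/-- A time-dependent scalar field on `ℝ × ℝ³` is smooth (jointly in `(t,x)`). -/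
def SmoothS (f : ℝ → (Fin 3 → ℝ) → ℝ) : Prop :=
  ContDiff ℝ (⊤ : ℕ∞) (fun p : ℝ × (Fin 3 → ℝ) => f p.1 p.2)

/-- Directional derivatives of a `C²` function commute. -/
theorem fderiv_fderiv_apply_comm {X : Type*} [NormedAddCommGroup X] [NormedSpace ℝ X]
    {f : X → ℝ} (hf : ContDiff ℝ 2 f) (v w p : X) :
    fderiv ℝ (fun q => fderiv ℝ f q v) p w = fderiv ℝ (fun q => fderiv ℝ f q w) p v := by
  have hd : DifferentiableAt ℝ (fderiv ℝ f) p :=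
    (hf.fderiv_right (m := 1) (by norm_num)).differentiable (by norm_num) p
  have hsymm : IsSymmSndFDerivAt ℝ f p :=
    hf.contDiffAt.isSymmSndFDerivAt (by simp)
  rw [fderiv_clm_apply hd (differentiableAt_const v),
    fderiv_clm_apply hd (differentiableAt_const w)]
  simpa using hsymm w v

theorem pd_eq_fderiv {f : (Fin 3 → ℝ) → ℝ} {x : Fin 3 → ℝ} (hf : DifferentiableAt ℝ f x)
    (i : Fin 3) : pd f i x = fderiv ℝ f x (Pi.single i 1) := by
  have hf' : DifferentiableAt ℝ f (Function.update x i (x i)) := by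
    rwa [Function.update_eq_self]
  have h := hf'.hasFDerivAt.comp_hasDerivAt (x i) (hasDerivAt_update x i (x i))
  rw [Function.update_eq_self] at h
  exact h.deriv

theorem pd_add {f g : (Fin 3 → ℝ) → ℝ} {x : Fin 3 → ℝ} (hf : DifferentiableAt ℝ f x)
    (hg : DifferentiableAt ℝ g x) (i : Fin 3) :
    pd (fun y => f y + g y) i x = pd f i x + pd g i x := by
  rw [pd_eq_fderiv hf, pd_eq_fderiv hg, pd_eq_fderiv (hf.fun_add hg), fderiv_fun_add hf hg]
  rfl

theorem pd_sub {f g : (Fin 3 → ℝ) → ℝ} {x : Fin 3 → ℝ} (hf : DifferentiableAt ℝ f x)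
    (hg : DifferentiableAt ℝ g x) (i : Fin 3) :
    pd (fun y => f y - g y) i x = pd f i x - pd g i x := by
  rw [pd_eq_fderiv hf, pd_eq_fderiv hg, pd_eq_fderiv (hf.fun_sub hg), fderiv_fun_sub hf hg]
  rfl

theorem pd_eq_fderiv_fun {f : (Fin 3 → ℝ) → ℝ} (hf : Differentiable ℝ f) (i : Fin 3) :
    (fun y => pd f i y) = fun y => fderiv ℝ f y (Pi.single i 1) :=
  funext fun y => pd_eq_fderiv (hf y) i

theorem ContDiff.differentiable_pd {f : (Fin 3 → ℝ) → ℝ} (hf : ContDiff ℝ 2 f) (i : Fin 3) :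
    Differentiable ℝ (fun y => pd f i y) := by
  rw [pd_eq_fderiv_fun (hf.differentiable (by norm_num))]
  exact ((hf.fderiv_right (m := 1) (by norm_num)).clm_apply contDiff_const).differentiable
    (by norm_num)

theorem pd_comm {f : (Fin 3 → ℝ) → ℝ} (hf : ContDiff ℝ 2 f) (i j : Fin 3) (x : Fin 3 → ℝ) :
    pd (fun y => pd f i y) j x = pd (fun y => pd f j y) i x := by
  have hd := hf.differentiable (by norm_num)
  rw [pd_eq_fderiv (hf.differentiable_pd i x), pd_eq_fderiv (hf.differentiable_pd j x),
    pd_eq_fderiv_fun hd, pd_eq_fderiv_fun hd, fderiv_fderiv_apply_comm hf]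

theorem ContDiff.differentiable_curl3 {V : (Fin 3 → ℝ) → Fin 3 → ℝ}
    (hV : ∀ i, ContDiff ℝ 2 fun y => V y i) (i : Fin 3) :
    Differentiable ℝ fun y => curl3 V y i :=
  ((hV _).differentiable_pd _).sub ((hV _).differentiable_pd _)

theorem curl3_add {U V : (Fin 3 → ℝ) → Fin 3 → ℝ} {x : Fin 3 → ℝ}
    (hU : ∀ i, DifferentiableAt ℝ (fun y => U y i) x)
    (hV : ∀ i, DifferentiableAt ℝ (fun y => V y i) x) (i : Fin 3) :
    curl3 (fun y j => U y j + V y j) x i = curl3 U x i + curl3 V x i := by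
  simp only [curl3, pd_add (hU _) (hV _)]
  ring

theorem div3_add {U V : (Fin 3 → ℝ) → Fin 3 → ℝ} {x : Fin 3 → ℝ}
    (hU : ∀ i, DifferentiableAt ℝ (fun y => U y i) x)
    (hV : ∀ i, DifferentiableAt ℝ (fun y => V y i) x) :
    div3 (fun y j => U y j + V y j) x = div3 U x + div3 V x := by
  simp only [div3, pd_add (hU _) (hV _), Finset.sum_add_distrib]

theorem curl3_grad3 {f : (Fin 3 → ℝ) → ℝ} (hf : ContDiff ℝ 2 f) (x : Fin 3 → ℝ) (i : Fin 3) :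
    curl3 (grad3 f) x i = 0 :=
  sub_eq_zero.2 (pd_comm hf (i + 2) (i + 1) x)

theorem div3_curl3 {V : (Fin 3 → ℝ) → Fin 3 → ℝ} (hV : ∀ i, ContDiff ℝ 2 fun y => V y i)
    (x : Fin 3 → ℝ) : div3 (curl3 V) x = 0 := by
  have h : ∀ i j, DifferentiableAt ℝ (fun y => pd (fun z => V z i) j y) x :=
    fun i j => (hV i).differentiable_pd j x
  simp only [div3, curl3, pd_sub (h _ _) (h _ _), Fin.sum_univ_three]
  have e10 : (1 : Fin 3) + 2 = 0 := rfl
  have e11 : (1 : Fin 3) + 1 = 2 := rfl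
  have e21 : (2 : Fin 3) + 2 = 1 := rfl
  have e20 : (2 : Fin 3) + 1 = 0 := rfl
  simp only [zero_add, e10, e11, e21, e20]
  rw [pd_comm (hV 2) 1 0, pd_comm (hV 1) 2 0, pd_comm (hV 0) 2 1]
  ring

theorem SmoothV.smoothS {V : ℝ → (Fin 3 → ℝ) → Fin 3 → ℝ} (hV : SmoothV V) (i : Fin 3) :
    SmoothS fun t x => V t x i :=
  contDiff_pi.1 hV i

theorem SmoothS.contDiff_space {f : ℝ → (Fin 3 → ℝ) → ℝ} (hf : SmoothS f) (t : ℝ) :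
    ContDiff ℝ 2 (f t) :=
  (ContDiff.comp hf (contDiff_prodMk_right t)).of_le (WithTop.coe_le_coe.2 le_top)

theorem SmoothS.differentiable {f : ℝ → (Fin 3 → ℝ) → ℝ} (hf : SmoothS f) :
    Differentiable ℝ fun p : ℝ × (Fin 3 → ℝ) => f p.1 p.2 :=
  ContDiff.differentiable hf (by simp)

theorem SmoothS.differentiable_time {f : ℝ → (Fin 3 → ℝ) → ℝ} (hf : SmoothS f)
    (x : Fin 3 → ℝ) : Differentiable ℝ fun s => f s x :=
  hf.differentiable.comp (differentiable_id.prodMk (differentiable_const x))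

theorem SmoothS.deriv_eq_fderiv {f : ℝ → (Fin 3 → ℝ) → ℝ} (hf : SmoothS f) (t : ℝ)
    (x : Fin 3 → ℝ) :
    deriv (fun s => f s x) t =
      fderiv ℝ (fun p : ℝ × (Fin 3 → ℝ) => f p.1 p.2) (t, x) (1, 0) := by
  have h := (hf.differentiable (t, x)).hasFDerivAt.comp_hasDerivAt t
    ((hasDerivAt_id t).prodMk (hasDerivAt_const t x))
  exact h.deriv

theorem SmoothS.pd_eq_fderiv {f : ℝ → (Fin 3 → ℝ) → ℝ} (hf : SmoothS f) (t : ℝ)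
    (x : Fin 3 → ℝ) (i : Fin 3) :
    pd (f t) i x =
      fderiv ℝ (fun p : ℝ × (Fin 3 → ℝ) => f p.1 p.2) (t, x) (0, Pi.single i 1) := by
  have h := (hf.differentiable (t, x)).hasFDerivAt.comp x (hasFDerivAt_prodMk_right t x)
  have h' : HasFDerivAt (f t) _ x := h
  rw [_root_.pd_eq_fderiv h'.differentiableAt, h'.fderiv]
  simp

theorem SmoothS.fderiv_apply {f : ℝ → (Fin 3 → ℝ) → ℝ} (hf : SmoothS f)
    (v : ℝ × (Fin 3 → ℝ)) :
    SmoothS fun t x => fderiv ℝ (fun p : ℝ × (Fin 3 → ℝ) => f p.1 p.2) (t, x) v :=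
  (ContDiff.fderiv_right (m := (⊤ : ℕ∞)) hf (by simp)).clm_apply contDiff_const

theorem SmoothS.pd {f : ℝ → (Fin 3 → ℝ) → ℝ} (hf : SmoothS f) (i : Fin 3) :
    SmoothS fun t x => pd (f t) i x := by
  simpa only [hf.pd_eq_fderiv] using hf.fderiv_apply (0, Pi.single i 1)

theorem SmoothS.deriv_pd_comm {f : ℝ → (Fin 3 → ℝ) → ℝ} (hf : SmoothS f) (t : ℝ)
    (x : Fin 3 → ℝ) (i : Fin 3) :
    deriv (fun s => _root_.pd (f s) i x) t =
      _root_.pd (fun y => deriv (fun s => f s y) t) i x := by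
  simp only [hf.pd_eq_fderiv, hf.deriv_eq_fderiv]
  rw [(hf.fderiv_apply (0, Pi.single i 1)).deriv_eq_fderiv,
    (hf.fderiv_apply (1, 0)).pd_eq_fderiv]
  exact fderiv_fderiv_apply_comm (ContDiff.of_le hf (WithTop.coe_le_coe.2 le_top)) _ _ _

theorem SmoothV.deriv_curl3 {V : ℝ → (Fin 3 → ℝ) → Fin 3 → ℝ} (hV : SmoothV V) (t : ℝ)
    (x : Fin 3 → ℝ) (i : Fin 3) :
    deriv (fun s => curl3 (V s) x i) t =
      curl3 (fun y j => deriv (fun s => V s y j) t) x i := by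
  have hd : ∀ j k, DifferentiableAt ℝ (fun s => pd (fun y => V s y j) k x) t :=
    fun j k => ((hV.smoothS j).pd k).differentiable_time x t
  simp only [curl3]
  rw [deriv_fun_sub (hd _ _) (hd _ _), (hV.smoothS _).deriv_pd_comm,
    (hV.smoothS _).deriv_pd_comm]

theorem SmoothV.differentiable_curl3_time {V : ℝ → (Fin 3 → ℝ) → Fin 3 → ℝ} (hV : SmoothV V)
    (x : Fin 3 → ℝ) (i : Fin 3) : Differentiable ℝ fun s => curl3 (V s) x i :=
  (((hV.smoothS _).pd _).differentiable_time x).sub (((hV.smoothS _).pd _).differentiable_time x)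

/-- the reduced Hamiltonian system `∂S/∂t = B`, `∂W/∂t = −η`,
`∂B/∂t = −∇×(∇×S + F + ∇W)`, `∂η/∂t = −∇·E − ΔW` for `E := ∇×S + F`, together with the
external charge and current density conditions `∂F/∂t = −J`, `∇·F = ρ`, `∇·B = 0`, implies
the full Maxwell equations `∂E/∂t = ∇×B − J`, `∂B/∂t = −∇×E`, `∇·E = ρ`, `∇·B = 0`,
and the inhomogeneous wave equation `∂²W/∂t² − ΔW = ρ`. -/
theorem reduced_hamiltonian_full_maxwell
    (S B F J : ℝ → (Fin 3 → ℝ) → Fin 3 → ℝ) (W η ρ : ℝ → (Fin 3 → ℝ) → ℝ)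
    (hS : SmoothV S) (hBs : SmoothV B) (hFs : SmoothV F) (hJs : SmoothV J)
    (hWs : SmoothS W) (hηs : SmoothS η) (hρs : SmoothS ρ)
    (E : ℝ → (Fin 3 → ℝ) → Fin 3 → ℝ)
    (hE : ∀ t x i, E t x i = curl3 (S t) x i + F t x i)
    (h1 : ∀ t x i, deriv (fun s => S s x i) t = B t x i)
    (h2 : ∀ t x, deriv (fun s => W s x) t = - η t x)
    (h3 : ∀ t x i, deriv (fun s => B s x i) t
        = - curl3 (fun y j => curl3 (S t) y j + F t y j + grad3 (W t) y j) x i)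
    (h4 : ∀ t x, deriv (fun s => η s x) t = - div3 (E t) x - lap3 (W t) x)
    (hF : ∀ t x i, deriv (fun s => F s x i) t = - J t x i)
    (hdivF : ∀ t x, div3 (F t) x = ρ t x)
    (hdivB : ∀ t x, div3 (B t) x = 0) :
    (∀ t x i, deriv (fun s => E s x i) t = curl3 (B t) x i - J t x i)
    ∧ (∀ t x i, deriv (fun s => B s x i) t = - curl3 (E t) x i)
    ∧ (∀ t x, div3 (E t) x = ρ t x)
    ∧ (∀ t x, div3 (B t) x = 0)
    ∧ (∀ t x, deriv (fun s => deriv (fun s' => W s' x) s) t - lap3 (W t) x = ρ t x) := by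
  have hE' : E = fun t x i => curl3 (S t) x i + F t x i := by
    funext t x i
    exact hE t x i
  have hSx : ∀ t i, ContDiff ℝ 2 fun y => S t y i := fun t i => (hS.smoothS i).contDiff_space t
  have hcurlS : ∀ t x i, DifferentiableAt ℝ (fun y => curl3 (S t) y i) x :=
    fun t x i => ContDiff.differentiable_curl3 (hSx t) i x
  have hFx : ∀ t x i, DifferentiableAt ℝ (fun y => F t y i) x :=
    fun t x i => ((hFs.smoothS i).contDiff_space t).differentiable (by norm_num) x
  have hEx : ∀ t x i, DifferentiableAt ℝ (fun y => E t y i) x := by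
    intro t x i
    simpa only [hE'] using (hcurlS t x i).fun_add (hFx t x i)
  have hdivE : ∀ t x, div3 (E t) x = ρ t x := by
    intro t x
    rw [hE', div3_add (hcurlS t x) (hFx t x), div3_curl3 (hSx t), hdivF, zero_add]
  refine ⟨fun t x i => ?_, fun t x i => ?_, hdivE, hdivB, fun t x => ?_⟩
  · simp only [hE]
    rw [deriv_fun_add (hS.differentiable_curl3_time x i t)
      ((hFs.smoothS i).differentiable_time x t), hS.deriv_curl3, hF]
    simp only [h1]
    ring
  · have hW := hWs.contDiff_space t
    rw [h3]
    simp only [← hE]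
    rw [curl3_add (V := grad3 (W t)) (hEx t x) (fun j => hW.differentiable_pd j x),
      curl3_grad3 hW, add_zero]
  · simp only [h2]
    rw [deriv.fun_neg, h4, hdivE]
    ring
end

section
/- Let F : ℝ³ → ℝ^{3×3} be a smooth matrix-valued function with F_{ij}(q) = −F_{ji}(q) for all q and all i,j. On smooth functions f, g : ℝ³ × ℝ³ → ℝ of the variables (q,p), define the magnetically twisted bracket {f,g}(q,p) := Σᵢ (∂f/∂pᵢ · ∂g/∂qᵢ − ∂f/∂qᵢ · ∂g/∂pᵢ) + Σᵢⱼ F_{ji}(q) · ∂f/∂pᵢ · ∂g/∂pⱼ. Then the Jacobi identity {f,{g,h}} + {g,{h,f}} + {h,{f,g}} = 0 holds for all smooth f, g, h : ℝ³ × ℝ³ → ℝ if and only if the Maxwell field equations ∂F_{ij}/∂q_k + ∂F_{jk}/∂q_i + ∂F_{ki}/∂q_j = 0 hold for all i, j, k ∈ {1,2,3} and all q ∈ ℝ³. -/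
open scoped BigOperators

/-- Partial derivative `∂f/∂qᵢ` of a function on phase space `ℝ³ × ℝ³ ∋ (q,p)`. -/
noncomputable def pdq (f : (Fin 3 → ℝ) × (Fin 3 → ℝ) → ℝ) (i : Fin 3)
    (x : (Fin 3 → ℝ) × (Fin 3 → ℝ)) : ℝ :=
  deriv (fun y => f (Function.update x.1 i y, x.2)) (x.1 i)

/-- Partial derivative `∂f/∂pᵢ` of a function on phase space `ℝ³ × ℝ³ ∋ (q,p)`. -/
noncomputable def pdp (f : (Fin 3 → ℝ) × (Fin 3 → ℝ) → ℝ) (i : Fin 3)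
    (x : (Fin 3 → ℝ) × (Fin 3 → ℝ)) : ℝ :=
  deriv (fun y => f (x.1, Function.update x.2 i y)) (x.2 i)

/-- The magnetically twisted bracket
`{f,g}(q,p) := Σᵢ (∂f/∂pᵢ ∂g/∂qᵢ − ∂f/∂qᵢ ∂g/∂pᵢ) + Σᵢⱼ F_{ji}(q) ∂f/∂pᵢ ∂g/∂pⱼ`. -/
noncomputable def magBracket (F : (Fin 3 → ℝ) → Fin 3 → Fin 3 → ℝ)
    (f g : (Fin 3 → ℝ) × (Fin 3 → ℝ) → ℝ) (x : (Fin 3 → ℝ) × (Fin 3 → ℝ)) : ℝ :=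
  (∑ i, (pdp f i x * pdq g i x - pdq f i x * pdp g i x))
    + ∑ i, ∑ j, F x.1 j i * pdp f i x * pdp g j x

/-- The `i`-th coordinate direction in position space. -/
noncomputable def posDir (i : Fin 3) : (Fin 3 → ℝ) × (Fin 3 → ℝ) := (Pi.single i 1, 0)

/-- The `i`-th coordinate direction in momentum space. -/
noncomputable def momDir (i : Fin 3) : (Fin 3 → ℝ) × (Fin 3 → ℝ) := (0, Pi.single i 1)

theorem pdq_eq_fderiv {f : (Fin 3 → ℝ) × (Fin 3 → ℝ) → ℝ} {x : (Fin 3 → ℝ) × (Fin 3 → ℝ)}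
    (hf : DifferentiableAt ℝ f x) (i : Fin 3) : pdq f i x = fderiv ℝ f x (posDir i) := by
  have hf' : HasFDerivAt f (fderiv ℝ f x) (Function.update x.1 i (x.1 i), x.2) := by
    simpa using hf.hasFDerivAt
  exact (hf'.comp_hasDerivAt (x.1 i)
    ((hasDerivAt_update x.1 i (x.1 i)).prodMk (hasDerivAt_const (x.1 i) x.2))).deriv

theorem pdp_eq_fderiv {f : (Fin 3 → ℝ) × (Fin 3 → ℝ) → ℝ} {x : (Fin 3 → ℝ) × (Fin 3 → ℝ)}
    (hf : DifferentiableAt ℝ f x) (i : Fin 3) : pdp f i x = fderiv ℝ f x (momDir i) := by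
  have hf' : HasFDerivAt f (fderiv ℝ f x) (x.1, Function.update x.2 i (x.2 i)) := by
    simpa using hf.hasFDerivAt
  exact (hf'.comp_hasDerivAt (x.2 i)
    ((hasDerivAt_const (x.2 i) x.1).prodMk (hasDerivAt_update x.2 i (x.2 i)))).deriv

section SecondDerivatives

variable {E : Type*} [NormedAddCommGroup E] [NormedSpace ℝ E] {f : E → ℝ}

theorem differentiable_fderiv_apply (hf : ContDiff ℝ (⊤ : ℕ∞) f) (v : E) :
    Differentiable ℝ (fun x => fderiv ℝ f x v) :=
  ((hf.fderiv_right (m := 1) (by norm_cast)).clm_apply contDiff_const).differentiable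
    one_ne_zero

theorem fderiv_fderiv_apply_comm_s11 (hf : ContDiff ℝ (⊤ : ℕ∞) f) (u v x : E) :
    fderiv ℝ (fun y => fderiv ℝ f y v) x u = fderiv ℝ (fun y => fderiv ℝ f y u) x v := by
  have hd : DifferentiableAt ℝ (fderiv ℝ f) x :=
    (hf.fderiv_right (m := 1) (by norm_cast)).differentiable one_ne_zero x
  have hsymm : IsSymmSndFDerivAt ℝ f x :=
    hf.contDiffAt.isSymmSndFDerivAt (by
      rw [minSmoothness_of_isRCLikeNormedField]
      exact WithTop.coe_le_coe.2 (le_top (a := (2 : ℕ∞))))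
  rw [fderiv_clm_apply hd (differentiableAt_const v),
    fderiv_clm_apply hd (differentiableAt_const u)]
  simpa using hsymm u v

end SecondDerivatives

theorem magBracket_eq_fderiv (F : (Fin 3 → ℝ) → Fin 3 → Fin 3 → ℝ)
    {f g : (Fin 3 → ℝ) × (Fin 3 → ℝ) → ℝ} {x : (Fin 3 → ℝ) × (Fin 3 → ℝ)}
    (hf : DifferentiableAt ℝ f x) (hg : DifferentiableAt ℝ g x) :
    magBracket F f g x =
      (∑ i, (fderiv ℝ f x (momDir i) * fderiv ℝ g x (posDir i)
        - fderiv ℝ f x (posDir i) * fderiv ℝ g x (momDir i)))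
      + ∑ i, ∑ j, F x.1 j i * fderiv ℝ f x (momDir i) * fderiv ℝ g x (momDir j) := by
  simp only [magBracket, pdq_eq_fderiv hf, pdq_eq_fderiv hg, pdp_eq_fderiv hf, pdp_eq_fderiv hg]

/-- The bracket of two smooth functions is differentiable, with derivative given by the
Leibniz rule. -/
theorem hasFDerivAt_magBracket {F : (Fin 3 → ℝ) → Fin 3 → Fin 3 → ℝ}
    (hF : ∀ i j, ContDiff ℝ (⊤ : ℕ∞) (fun q => F q i j))
    {f g : (Fin 3 → ℝ) × (Fin 3 → ℝ) → ℝ} (hf : ContDiff ℝ (⊤ : ℕ∞) f)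
    (hg : ContDiff ℝ (⊤ : ℕ∞) g) (x : (Fin 3 → ℝ) × (Fin 3 → ℝ)) :
    HasFDerivAt (magBracket F f g)
      ((∑ i, ((fderiv ℝ f x (momDir i) • fderiv ℝ (fun y => fderiv ℝ g y (posDir i)) x
          + fderiv ℝ g x (posDir i) • fderiv ℝ (fun y => fderiv ℝ f y (momDir i)) x)
        - (fderiv ℝ f x (posDir i) • fderiv ℝ (fun y => fderiv ℝ g y (momDir i)) x
          + fderiv ℝ g x (momDir i) • fderiv ℝ (fun y => fderiv ℝ f y (posDir i)) x)))
      + ∑ i, ∑ j, ((F x.1 j i * fderiv ℝ f x (momDir i)) •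
            fderiv ℝ (fun y => fderiv ℝ g y (momDir j)) x
          + fderiv ℝ g x (momDir j) •
            (F x.1 j i • fderiv ℝ (fun y => fderiv ℝ f y (momDir i)) x
              + fderiv ℝ f x (momDir i) • (fderiv ℝ (fun q => F q j i) x.1).comp
                (ContinuousLinearMap.fst ℝ (Fin 3 → ℝ) (Fin 3 → ℝ))))) x := by
  have hfun : magBracket F f g = fun y =>
      (∑ i, (fderiv ℝ f y (momDir i) * fderiv ℝ g y (posDir i)
        - fderiv ℝ f y (posDir i) * fderiv ℝ g y (momDir i)))
      + ∑ i, ∑ j, F y.1 j i * fderiv ℝ f y (momDir i) * fderiv ℝ g y (momDir j) :=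
    funext fun y => magBracket_eq_fderiv F (hf.differentiable (by simp) y)
      (hg.differentiable (by simp) y)
  have hdf v := (differentiable_fderiv_apply hf v x).hasFDerivAt
  have hdg v := (differentiable_fderiv_apply hg v x).hasFDerivAt
  have hdF (i j : Fin 3) : HasFDerivAt (fun y : (Fin 3 → ℝ) × (Fin 3 → ℝ) => F y.1 i j)
      ((fderiv ℝ (fun q => F q i j) x.1).comp (ContinuousLinearMap.fst ℝ _ _)) x :=
    (((hF i j).differentiable (by simp) x.1).hasFDerivAt).comp x hasFDerivAt_fst
  rw [hfun]
  exact (HasFDerivAt.fun_sum fun i _ => ((hdf _).mul (hdg _)).sub ((hdf _).mul (hdg _))).add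
    (HasFDerivAt.fun_sum fun i _ => HasFDerivAt.fun_sum fun j _ =>
      ((hdF j i).mul (hdf _)).mul (hdg _))

/-- The algebraic identity behind the Jacobiator: `fq`, `fp` stand for the first derivatives of `f`
and `fqq`, `fqp`, `fpp` for its second derivatives, similarly for `g` and `h`, and `dA k` is the
derivative of the antisymmetric matrix `A` in direction `k`. All terms with second derivatives
cancel. -/
theorem sum_cyclic_bracket_eq (A : Fin 3 → Fin 3 → ℝ) (hA : ∀ i j, A i j = - A j i)
    (dA : Fin 3 → Fin 3 → Fin 3 → ℝ) (fq fp gq gp hq hp : Fin 3 → ℝ)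
    (fqq fqp fpp gqq gqp gpp hqq hqp hpp : Fin 3 → Fin 3 → ℝ)
    (hfqq : ∀ i j, fqq i j = fqq j i) (hfpp : ∀ i j, fpp i j = fpp j i)
    (hgqq : ∀ i j, gqq i j = gqq j i) (hgpp : ∀ i j, gpp i j = gpp j i)
    (hhqq : ∀ i j, hqq i j = hqq j i) (hhpp : ∀ i j, hpp i j = hpp j i) :
    let BQ (aq ap bq bp : Fin 3 → ℝ) (aqq aqp bqq bqp : Fin 3 → Fin 3 → ℝ) (k : Fin 3) : ℝ :=
      (∑ i, (ap i * bqq k i + bq i * aqp k i - (aq i * bqp k i + bp i * aqq k i)))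
        + ∑ i, ∑ j, (A j i * ap i * bqp k j + bp j * (A j i * aqp k i + ap i * dA k j i))
    let BP (aq ap bq bp : Fin 3 → ℝ) (aqp app bqp bpp : Fin 3 → Fin 3 → ℝ) (k : Fin 3) : ℝ :=
      (∑ i, (ap i * bqp i k + bq i * app k i - (aq i * bpp k i + bp i * aqp i k)))
        + ∑ i, ∑ j, (A j i * ap i * bpp k j + bp j * (A j i * app k i))
    let B (aq ap Bq Bp : Fin 3 → ℝ) : ℝ :=
      (∑ i, (ap i * Bq i - aq i * Bp i)) + ∑ i, ∑ j, A j i * ap i * Bp j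
    B fq fp (BQ gq gp hq hp gqq gqp hqq hqp) (BP gq gp hq hp gqp gpp hqp hpp)
      + B gq gp (BQ hq hp fq fp hqq hqp fqq fqp) (BP hq hp fq fp hqp hpp fqp fpp)
      + B hq hp (BQ fq fp gq gp fqq fqp gqq gqp) (BP fq fp gq gp fqp fpp gqp gpp)
    = ∑ i, ∑ j, ∑ k, fp i * gp j * hp k * (dA i k j + dA k j i + dA j i k) := by
  have hA0 (i : Fin 3) : A i i = 0 := by linarith [hA i i]
  simp only [Fin.sum_univ_three, hA0, hA 1 0, hA 2 0, hA 2 1, hfqq 1 0, hfqq 2 0, hfqq 2 1,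
    hfpp 1 0, hfpp 2 0, hfpp 2 1, hgqq 1 0, hgqq 2 0, hgqq 2 1, hgpp 1 0, hgpp 2 0, hgpp 2 1,
    hhqq 1 0, hhqq 2 0, hhqq 2 1, hhpp 1 0, hhpp 2 0, hhpp 2 1]
  ring

/-- The Jacobiator of the twisted bracket involves only the momentum derivatives of the three
functions, contracted with the cyclic sum of the derivatives of the field tensor. -/
theorem magBracket_jacobiator {F : (Fin 3 → ℝ) → Fin 3 → Fin 3 → ℝ}
    (hFs : ∀ i j, ContDiff ℝ (⊤ : ℕ∞) (fun q => F q i j))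
    (hFa : ∀ q i j, F q i j = - F q j i)
    {f g h : (Fin 3 → ℝ) × (Fin 3 → ℝ) → ℝ} (hf : ContDiff ℝ (⊤ : ℕ∞) f)
    (hg : ContDiff ℝ (⊤ : ℕ∞) g) (hh : ContDiff ℝ (⊤ : ℕ∞) h)
    (x : (Fin 3 → ℝ) × (Fin 3 → ℝ)) :
    magBracket F f (magBracket F g h) x + magBracket F g (magBracket F h f) x
      + magBracket F h (magBracket F f g) x
    = ∑ i, ∑ j, ∑ k, pdp f i x * pdp g j x * pdp h k x *
        (pd (fun y => F y k j) i x.1 + pd (fun y => F y j i) k x.1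
          + pd (fun y => F y i k) j x.1) := by
  have df := hf.differentiable (by simp) x
  have dg := hg.differentiable (by simp) x
  have dh := hh.differentiable (by simp) x
  have bgh := hasFDerivAt_magBracket hFs hg hh x
  have bhf := hasFDerivAt_magBracket hFs hh hf x
  have bfg := hasFDerivAt_magBracket hFs hf hg x
  have dF (i j k : Fin 3) := pd_eq_fderiv ((hFs i j).differentiable (by simp) x.1) k
  rw [magBracket_eq_fderiv F df bgh.differentiableAt, magBracket_eq_fderiv F dg
    bhf.differentiableAt, magBracket_eq_fderiv F dh bfg.differentiableAt,
    bgh.fderiv, bhf.fderiv, bfg.fderiv]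
  simp only [pdp_eq_fderiv df, pdp_eq_fderiv dg, pdp_eq_fderiv dh, dF]
  have key := sum_cyclic_bracket_eq (F x.1) (hFa x.1)
    (fun k i j => fderiv ℝ (fun q => F q i j) x.1 (Pi.single k 1))
    (fun i => fderiv ℝ f x (posDir i)) (fun i => fderiv ℝ f x (momDir i))
    (fun i => fderiv ℝ g x (posDir i)) (fun i => fderiv ℝ g x (momDir i))
    (fun i => fderiv ℝ h x (posDir i)) (fun i => fderiv ℝ h x (momDir i))
    (fun i j => fderiv ℝ (fun y => fderiv ℝ f y (posDir j)) x (posDir i))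
    (fun i j => fderiv ℝ (fun y => fderiv ℝ f y (momDir j)) x (posDir i))
    (fun i j => fderiv ℝ (fun y => fderiv ℝ f y (momDir j)) x (momDir i))
    (fun i j => fderiv ℝ (fun y => fderiv ℝ g y (posDir j)) x (posDir i))
    (fun i j => fderiv ℝ (fun y => fderiv ℝ g y (momDir j)) x (posDir i))
    (fun i j => fderiv ℝ (fun y => fderiv ℝ g y (momDir j)) x (momDir i))
    (fun i j => fderiv ℝ (fun y => fderiv ℝ h y (posDir j)) x (posDir i))
    (fun i j => fderiv ℝ (fun y => fderiv ℝ h y (momDir j)) x (posDir i))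
    (fun i j => fderiv ℝ (fun y => fderiv ℝ h y (momDir j)) x (momDir i))
    (fun _ _ => fderiv_fderiv_apply_comm_s11 hf _ _ _) (fun _ _ => fderiv_fderiv_apply_comm_s11 hf _ _ _)
    (fun _ _ => fderiv_fderiv_apply_comm_s11 hg _ _ _) (fun _ _ => fderiv_fderiv_apply_comm_s11 hg _ _ _)
    (fun _ _ => fderiv_fderiv_apply_comm_s11 hh _ _ _) (fun _ _ => fderiv_fderiv_apply_comm_s11 hh _ _ _)
  have posDir_fst (i : Fin 3) : (posDir i).1 = Pi.single i 1 := rfl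
  have momDir_fst (i : Fin 3) : (momDir i).1 = 0 := rfl
  simp only [add_apply, sub_apply, sum_apply, smul_apply, ContinuousLinearMap.comp_apply,
    ContinuousLinearMap.coe_fst', smul_eq_mul, posDir_fst, momDir_fst, map_zero, mul_zero,
    add_zero, fun i j => fderiv_fderiv_apply_comm_s11 hf (momDir i) (posDir j) x,
    fun i j => fderiv_fderiv_apply_comm_s11 hg (momDir i) (posDir j) x,
    fun i j => fderiv_fderiv_apply_comm_s11 hh (momDir i) (posDir j) x]
  exact key

theorem contDiff_momentum (i : Fin 3) :
    ContDiff ℝ (⊤ : ℕ∞) (fun x : (Fin 3 → ℝ) × (Fin 3 → ℝ) => x.2 i) := by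
  fun_prop

theorem pdp_momentum (i j : Fin 3) (x : (Fin 3 → ℝ) × (Fin 3 → ℝ)) :
    pdp (fun x => x.2 i) j x = if i = j then 1 else 0 := by
  unfold pdp
  split_ifs with hij
  · subst hij; simp
  · simp [Function.update_of_ne hij]

/-- for a smooth antisymmetric matrix field `F` on `ℝ³`, the magnetically
twisted bracket satisfies the Jacobi identity for all smooth functions on phase space iff
the Maxwell field equations `∂F_{ij}/∂q_k + ∂F_{jk}/∂q_i + ∂F_{ki}/∂q_j = 0` hold. -/
theorem jacobi_iff_maxwell
    (F : (Fin 3 → ℝ) → Fin 3 → Fin 3 → ℝ)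
    (hFs : ∀ i j, ContDiff ℝ (⊤ : ℕ∞) (fun q => F q i j))
    (hFa : ∀ q i j, F q i j = - F q j i) :
    (∀ f g h : (Fin 3 → ℝ) × (Fin 3 → ℝ) → ℝ,
        ContDiff ℝ (⊤ : ℕ∞) f → ContDiff ℝ (⊤ : ℕ∞) g → ContDiff ℝ (⊤ : ℕ∞) h →
        ∀ x, magBracket F f (magBracket F g h) x
            + magBracket F g (magBracket F h f) x
            + magBracket F h (magBracket F f g) x = 0)
    ↔ (∀ i j k : Fin 3, ∀ q : Fin 3 → ℝ,
        pd (fun y => F y i j) k q + pd (fun y => F y j k) i q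
          + pd (fun y => F y k i) j q = 0) := by
  constructor
  · intro hJ i j k q
    have hJ' := hJ _ _ _ (contDiff_momentum j) (contDiff_momentum i) (contDiff_momentum k) (q, 0)
    rw [magBracket_jacobiator hFs hFa (contDiff_momentum j) (contDiff_momentum i)
      (contDiff_momentum k)] at hJ'
    simp only [pdp_momentum, ite_mul, one_mul, zero_mul, Finset.sum_ite_eq, Finset.mem_univ,
      if_true, mul_ite, mul_one, mul_zero] at hJ'
    linarith
  · intro hM f g h hf hg hh x
    rw [magBracket_jacobiator hFs hFa hf hg hh]
    refine Finset.sum_eq_zero fun i _ => Finset.sum_eq_zero fun j _ =>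
      Finset.sum_eq_zero fun k _ => ?_
    rw [hM k j i x.1, mul_zero]
end
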